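/- arXiv:1909.10455 — 2 statements merged into one kernel-verified Lean document; each statement's English description precedes it below -/
import Mathlib

section
/- Let d, n ≥ 1, r ∈ [1,2], β ∈ (0,∞)^d, and let γ be the weighted norm γ(g) = (Σ_{j=1}^d (β_j|g_j|)^r)^{1/r} on ℝ^d. Let Θ ⊆ ℝ^d be nonempty, compact, convex, quadratically convex and orthosymmetric. Then for every ε > 0 there exists λ ∈ (0,∞)^d such that for every sequence g₁,…,gₙ ∈ ℝ^d with γ(g_i) ≤ 1 for all i, and every θ ∈ Θ, the diagonally-scaled gradient method with scaling λ satisfies Σ_{i=1}^n ⟨g_i, θ_i − θ⟩ ≤ √n · sup_{θ'∈Θ} (Σ_{j=1}^d θ'_j²/β_j²)^{1/2} + ε. -/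
/-!
Per coordinate, the iterates are minus the scaled partial sums of the gradients, so expanding the
square of the total sum `S` gives `∑ᵢ gᵢ θᵢ = -(S² - ∑ᵢ gᵢ²) / (2λ)`; together with
`-S θ ≤ S² / (2λ) + λ θ² / 2` the regret is at most `∑ⱼ (λⱼ θⱼ² + ∑ᵢ gᵢⱼ² / λⱼ) / 2`
(`dsgRegret_le`). Since `r ≤ 2`, the constraint `γ(gᵢ) ≤ 1` forces `∑ⱼ (βⱼ gᵢⱼ)² ≤ 1`
(`sum_sq_le_one`). The scaling `λⱼ = c / βⱼ²` then gives regret at most `(c B² + n / c) / 2`, where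
`B` is the supremum in the statement. For `B > 0` the choice `c = √n / B` yields exactly `√n B`,
and for `B = 0` the choice `c = n / ε` yields `ε / 2`.
-/

open Finset

/-- `S² := {(s₁²,…,s_d²) : s ∈ S}` is convex. -/
def QuadConvex {d : ℕ} (S : Set (Fin d → ℝ)) : Prop :=
  Convex ℝ ((fun (θ : Fin d → ℝ) (j : Fin d) => (θ j) ^ 2) '' S)

/-- `S` is invariant under sign flips of coordinates. -/
def OrthoSymm {d : ℕ} (S : Set (Fin d → ℝ)) : Prop :=
  ∀ θ ∈ S, ∀ ε : Fin d → ℝ, (∀ j, ε j = 1 ∨ ε j = -1) →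
    (fun j => ε j * θ j) ∈ S

/-- Iterates of the diagonally-scaled gradient method with scaling `lam`:
`θ₁ = 0` and `θ_{i+1,j} = θ_{i,j} - g_{i,j} / lam j`. -/
noncomputable def dsgIter (d n : ℕ) (lam : Fin d → ℝ)
    (g : Fin n → Fin d → ℝ) (i : Fin n) : Fin d → ℝ :=
  fun j => -(∑ l ∈ Finset.univ.filter (fun l : Fin n => l.val < i.val), g l j) / lam j

/-- Regret of the diagonally-scaled gradient method on linear losses
`θ ↦ ⟨gᵢ, θ⟩` against comparator `θ`. -/
noncomputable def dsgRegret (d n : ℕ) (lam : Fin d → ℝ)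
    (g : Fin n → Fin d → ℝ) (θ : Fin d → ℝ) : ℝ :=
  ∑ i, ∑ j, g i j * (dsgIter d n lam g i j - θ j)

lemma two_mul_sum_mul_partialSum {n : ℕ} (g : Fin n → ℝ) :
    2 * ∑ i, g i * ∑ l ∈ Finset.univ.filter (fun l : Fin n => l.val < i.val), g l
      = (∑ i, g i) ^ 2 - ∑ i, g i ^ 2 := by
  induction n with
  | zero => simp
  | succ n ih =>
    have h1 : ∀ i : Fin n, (∑ l ∈ Finset.univ.filter
        (fun l : Fin (n + 1) => l.val < (Fin.castSucc i).val), g l)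
        = ∑ l ∈ Finset.univ.filter (fun l : Fin n => l.val < i.val), g (Fin.castSucc l) := by
      intro i
      have hi : ¬ (n < i.val) := by have := i.isLt; omega
      simp [Finset.sum_filter, Fin.sum_univ_castSucc, hi]
    have h2 : (∑ l ∈ Finset.univ.filter
        (fun l : Fin (n + 1) => l.val < (Fin.last n).val), g l)
        = ∑ l : Fin n, g (Fin.castSucc l) := by
      simp [Finset.sum_filter, Fin.sum_univ_castSucc]
    have := ih (fun i => g (Fin.castSucc i))
    rw [Fin.sum_univ_castSucc, Fin.sum_univ_castSucc (f := g),
      Fin.sum_univ_castSucc (f := fun i => g i ^ 2), h2]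
    simp only [h1]
    linear_combination this

lemma dsgRegret_le (d n : ℕ) (lam : Fin d → ℝ) (hlam : ∀ j, 0 < lam j)
    (g : Fin n → Fin d → ℝ) (θ : Fin d → ℝ) :
    dsgRegret d n lam g θ ≤ ∑ j, (lam j * θ j ^ 2 + (∑ i, g i j ^ 2) / lam j) / 2 := by
  unfold dsgRegret dsgIter
  rw [Finset.sum_comm]
  refine Finset.sum_le_sum fun j _ => ?_
  have hj := hlam j
  have key := two_mul_sum_mul_partialSum (fun i => g i j)
  have e : ∑ i, g i j * (-(∑ l ∈ Finset.univ.filter (fun l : Fin n => l.val < i.val), g l j)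
        / lam j - θ j)
      = -(∑ i, g i j * ∑ l ∈ Finset.univ.filter (fun l : Fin n => l.val < i.val), g l j) / lam j
        - (∑ i, g i j) * θ j := by
    rw [Finset.sum_mul, ← Finset.sum_neg_distrib, Finset.sum_div, ← Finset.sum_sub_distrib]
    exact Finset.sum_congr rfl fun i _ => by ring
  rw [e]
  set A := ∑ i, g i j * ∑ l ∈ Finset.univ.filter (fun l : Fin n => l.val < i.val), g l j
  set S := ∑ i, g i j
  set Q := ∑ i, g i j ^ 2
  have hA : A = (S ^ 2 - Q) / 2 := by linarith
  have h : (lam j * θ j ^ 2 + Q / lam j) / 2 - (-A / lam j - S * θ j)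
      = (S + lam j * θ j) ^ 2 / (2 * lam j) := by
    rw [hA]; field_simp; ring
  have : 0 ≤ (S + lam j * θ j) ^ 2 / (2 * lam j) := by positivity
  linarith

/-- The `ℓʳ` unit ball is contained in the `ℓ²` unit ball when `r ≤ 2`. -/
lemma sum_sq_le_one {d : ℕ} (r : ℝ) (hr1 : 1 ≤ r) (hr2 : r ≤ 2) (x : Fin d → ℝ)
    (hx : ∀ j, 0 ≤ x j) (h : (∑ j, x j ^ r) ^ (1 / r) ≤ 1) : ∑ j, x j ^ 2 ≤ 1 := by
  have hr : 0 < r := by linarith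
  have h0 : ∀ j, 0 ≤ x j ^ r := fun j => Real.rpow_nonneg (hx j) r
  have hs : ∑ j, x j ^ r ≤ 1 := by
    by_contra! hc
    exact absurd h (not_le.mpr (Real.one_lt_rpow hc (by positivity)))
  refine le_trans (Finset.sum_le_sum fun j _ => ?_) hs
  have hj : x j ≤ 1 := by
    by_contra! hc
    have := Finset.single_le_sum (fun i _ => h0 i) (Finset.mem_univ j)
    linarith [Real.one_lt_rpow hc hr]
  rcases (hx j).eq_or_lt with h' | h'
  · rw [← h', Real.zero_rpow hr.ne']; norm_num
  · rw [← Real.rpow_two]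
    exact Real.rpow_le_rpow_of_exponent_ge h' hj hr2

theorem statement7 (d n : ℕ) (hd : 1 ≤ d) (hn : 1 ≤ n)
    (r : ℝ) (hr1 : 1 ≤ r) (hr2 : r ≤ 2)
    (β : Fin d → ℝ) (hβ : ∀ j, 0 < β j)
    (Θ : Set (Fin d → ℝ)) (hΘne : Θ.Nonempty) (hΘc : IsCompact Θ)
    (hΘconv : Convex ℝ Θ) (hΘqc : QuadConvex Θ) (hΘos : OrthoSymm Θ) :
    ∀ ε > 0, ∃ lam : Fin d → ℝ, (∀ j, 0 < lam j) ∧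
      ∀ g : Fin n → Fin d → ℝ,
        (∀ i, (∑ j, (β j * |g i j|) ^ r) ^ (1 / r) ≤ 1) →
      ∀ θ ∈ Θ,
        dsgRegret d n lam g θ ≤
          Real.sqrt n *
            sSup {t : ℝ | ∃ θ' ∈ Θ, t = Real.sqrt (∑ j, (θ' j) ^ 2 / (β j) ^ 2)}
          + ε := by
  intro ε hε
  set T := {t : ℝ | ∃ θ' ∈ Θ, t = Real.sqrt (∑ j, (θ' j) ^ 2 / (β j) ^ 2)} with hT
  have hbdd : BddAbove T := by
    have hc : Continuous fun θ' : Fin d → ℝ => Real.sqrt (∑ j, (θ' j) ^ 2 / (β j) ^ 2) := by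
      fun_prop
    refine (hΘc.image hc).bddAbove.mono ?_
    rintro t ⟨θ', h, rfl⟩
    exact ⟨θ', h, rfl⟩
  set B := sSup T
  have hle : ∀ θ ∈ Θ, Real.sqrt (∑ j, (θ j) ^ 2 / (β j) ^ 2) ≤ B := fun θ h =>
    le_csSup hbdd ⟨θ, h, rfl⟩
  have hB : 0 ≤ B := by
    obtain ⟨θ, h⟩ := hΘne
    exact (Real.sqrt_nonneg _).trans (hle θ h)
  have hn' : (0 : ℝ) < n := by exact_mod_cast hn
  -- `(c B² + n / c) / 2` is minimised at `c = √n / B` if `B > 0`; if `B = 0` its infimum `0` is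
  -- not attained, which is where `ε` is used.
  obtain ⟨c, hc, hcb⟩ : ∃ c : ℝ, 0 < c ∧ (c * B ^ 2 + n / c) / 2 ≤ Real.sqrt n * B + ε := by
    rcases hB.eq_or_lt with h | h
    · refine ⟨n / ε, by positivity, ?_⟩
      rw [← h]
      have : (n : ℝ) / (n / ε) = ε := by field_simp
      rw [this]
      linarith
    · have hs : 0 < Real.sqrt n := Real.sqrt_pos.mpr hn'
      refine ⟨Real.sqrt n / B, by positivity, ?_⟩
      have h1 : Real.sqrt n / B * B ^ 2 = Real.sqrt n * B := by field_simp
      have h2 : (n : ℝ) / (Real.sqrt n / B) = Real.sqrt n * B := by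
        field_simp
        rw [Real.sq_sqrt hn'.le]
      rw [h1, h2]
      linarith
  have hlam : ∀ j, 0 < c / β j ^ 2 := fun j => div_pos hc (pow_pos (hβ j) 2)
  refine ⟨fun j => c / β j ^ 2, hlam, fun g hg θ hθ => ?_⟩
  refine (dsgRegret_le d n _ hlam g θ).trans (le_trans ?_ hcb)
  have e : ∑ j, (c / β j ^ 2 * θ j ^ 2 + (∑ i, g i j ^ 2) / (c / β j ^ 2)) / 2
      = (c * (∑ j, θ j ^ 2 / β j ^ 2) + (∑ i, ∑ j, (β j * |g i j|) ^ 2) / c) / 2 := by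
    rw [Finset.sum_comm (γ := Fin n), ← Finset.sum_div, Finset.sum_add_distrib, Finset.mul_sum,
      Finset.sum_div]
    congr 2
    · exact Finset.sum_congr rfl fun j _ => by ring
    · refine Finset.sum_congr rfl fun j _ => ?_
      simp only [mul_pow, sq_abs]
      rw [← Finset.mul_sum]
      have := hβ j
      field_simp
  rw [e]
  have hθB : ∑ j, θ j ^ 2 / β j ^ 2 ≤ B ^ 2 := (Real.sqrt_le_left hB).mp (hle θ hθ)
  have hG : ∑ i, ∑ j, (β j * |g i j|) ^ 2 ≤ n := by
    refine (Finset.sum_le_sum fun i _ => sum_sq_le_one r hr1 hr2 (fun j => β j * |g i j|)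
      (fun j => mul_nonneg (hβ j).le (abs_nonneg _)) (hg i)).trans ?_
    simp
  gcongr
end

section
/- There is a universal constant c > 0 (independent of d, n, p, r) with the following property. For all d, n ≥ 1, p ∈ [2,∞), r ∈ [2,∞), with Θ = {θ ∈ ℝ^d : ‖θ‖_p ≤ 1} and γ = ‖·‖_r, there exists a hard instance (𝒳, F, 𝒫) for (Θ, γ, n) such that every estimator θ̂ : 𝒳ⁿ → ℝ^d satisfies sup_{P∈𝒫} E[f_P(θ̂(X₁,…,Xₙ)) − inf_{θ∈Θ} f_P(θ)] ≥ c · min{1, d^{1/2−1/p} · d^{1/2−1/r}/√n}. -/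
/-!
The lower bound is Assouad's method applied to a separable absolute-value loss. Samples are sign
vectors `x ∈ {±1}^d`, and `F(θ, x) = L ∑ⱼ |θⱼ - a xⱼ|` with `L = d^{-1/r}` and `a = d^{-1/p}`, so
that every subgradient has entries at most `L` in absolute value, hence `ℓ_r` norm at most 1, and
every point of `{±a}^d` lies in the `ℓ_p` unit ball. Under `P_v`, `v ∈ {±1}^d`, the coordinates of
`x` are independent with means `δ vⱼ`, where `δ = 1 / (2√n)`.

The point `a v` of the ball shows that an estimate `t` has excess loss at least `L a δ` for each
coordinate with `vⱼ tⱼ ≤ 0` (`expLoss_excess`). No estimate has the right sign in coordinate `j`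
both for `v` and for `v` with its `j`-th sign flipped, while the `n`-fold laws of these two have
Hellinger affinity `(1 - δ²)^{n/2}` (`sum_sqrt_signLaw`), so that the mass they share is at least
`(1 - δ²)^n / 2 ≥ 3/8` (`affinity_le_min`, `overlap`). Averaging over `v` gives risk at least
`(3/16) d L a δ = (3/32) d^{1 - 1/p - 1/r} / √n`, even without the minimum with 1.

The loss needs no truncation to `Θ`: it is bounded below, so estimators with values outside `Θ`
are covered as well.
-/

open Finset

/-- `g` is a subgradient of `φ` at `θ`. -/
def IsSubgradientAt {d : ℕ} (φ : (Fin d → ℝ) → ℝ) (θ g : Fin d → ℝ) : Prop :=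
  ∀ θ', φ θ + ∑ j, g j * (θ' j - θ j) ≤ φ θ'

/-- Expected loss `f_P(θ) = E_{X∼P}[F(θ,X)]` over the finite sample space `Fin m`. -/
noncomputable def expLoss {d m : ℕ} (P : Fin m → ℝ)
    (F : (Fin d → ℝ) → Fin m → ℝ) (θ : Fin d → ℝ) : ℝ :=
  ∑ x, P x * F θ x

/-- Risk of the estimator `est` under `P`: the expectation over an i.i.d. sample
`X₁,…,Xₙ ∼ P` of `f_P(est X₁…Xₙ) - inf_{θ ∈ Θ} f_P(θ)`. -/
noncomputable def risk (d n m : ℕ) (P : Fin m → ℝ)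
    (F : (Fin d → ℝ) → Fin m → ℝ) (Θ : Set (Fin d → ℝ))
    (est : (Fin n → Fin m) → (Fin d → ℝ)) : ℝ :=
  ∑ xs : Fin n → Fin m, (∏ i, P (xs i)) *
    (expLoss P F (est xs) - sInf (expLoss P F '' Θ))

/-- A hard instance for `(Θ, γ, n)`: a finite sample space `Fin m`, a loss `F`
convex in `θ` with all subgradients of `γ`-norm at most 1, and a finite family
of probability distributions `P` on `Fin m`, such that every estimator has
worst-case risk at least `bound`. -/
def IsHardInstance (d n m K : ℕ) (Θ : Set (Fin d → ℝ))
    (γ : (Fin d → ℝ) → ℝ) (F : (Fin d → ℝ) → Fin m → ℝ)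
    (P : Fin K → Fin m → ℝ) (bound : ℝ) : Prop :=
  (∀ x, ConvexOn ℝ Set.univ (fun θ => F θ x)) ∧
  (∀ x θ g, IsSubgradientAt (fun t => F t x) θ g → γ g ≤ 1) ∧
  (∀ v x, 0 ≤ P v x) ∧ (∀ v, ∑ x, P v x = 1) ∧
  ∀ est : (Fin n → Fin m) → (Fin d → ℝ), ∃ v,
    bound ≤ risk d n m (P v) F Θ est

/-! ### Biased sign laws and the absolute-value loss -/

/-- The sign `±1` encoded by a Boolean. -/
noncomputable def sgnB (b : Bool) : ℝ := if b then 1 else -1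

/-- Law on `{±1}` (encoded by `Bool`) with mean `δ * sgnB v`. -/
noncomputable def coinLaw (δ : ℝ) (v b : Bool) : ℝ := (1 + δ * (sgnB v * sgnB b)) / 2

/-- Product law on `{±1}^d` with mean vector `δ v`. -/
noncomputable def signLaw {d : ℕ} (δ : ℝ) (v x : Fin d → Bool) : ℝ := ∏ j, coinLaw δ (v j) (x j)

/-- The loss `L ∑ⱼ |θⱼ - a xⱼ|`. -/
noncomputable def absLoss {d : ℕ} (L a : ℝ) (θ : Fin d → ℝ) (x : Fin d → Bool) : ℝ :=
  L * ∑ j, |θ j - a * sgnB (x j)|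

/-- The sign vector `v` with its `j`-th sign reversed. -/
def flipAt {d : ℕ} (j : Fin d) (v : Fin d → Bool) : Fin d → Bool := Function.update v j (!(v j))

lemma flipAt_invol {d : ℕ} (j : Fin d) : Function.Involutive (flipAt j) := by
  intro v
  simp [flipAt]

lemma coinLaw_nonneg {δ : ℝ} (h0 : 0 ≤ δ) (h1 : δ ≤ 1) (v b : Bool) : 0 ≤ coinLaw δ v b := by
  cases v <;> cases b <;> simp [coinLaw, sgnB] <;> linarith

lemma sum_coinLaw (δ : ℝ) (v : Bool) : ∑ b, coinLaw δ v b = 1 := by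
  cases v <;> simp [coinLaw, sgnB] <;> ring

lemma sum_prod_bool {d : ℕ} (h : Fin d → Bool → ℝ) :
    ∑ x : Fin d → Bool, ∏ j, h j (x j) = ∏ j, ∑ b, h j b := by
  rw [Finset.prod_univ_sum, Fintype.piFinset_univ]

lemma signLaw_nonneg {d : ℕ} {δ : ℝ} (h0 : 0 ≤ δ) (h1 : δ ≤ 1) (v x : Fin d → Bool) :
    0 ≤ signLaw δ v x :=
  Finset.prod_nonneg fun _ _ => coinLaw_nonneg h0 h1 _ _

lemma sum_signLaw {d : ℕ} (δ : ℝ) (v : Fin d → Bool) : ∑ x, signLaw δ v x = 1 := by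
  unfold signLaw
  rw [sum_prod_bool fun j b => coinLaw δ (v j) b]
  exact Finset.prod_eq_one fun j _ => sum_coinLaw δ (v j)

/-! ### Hellinger affinity and overlap -/

lemma sqrt_prod_nonneg {ι : Type*} (s : Finset ι) (f : ι → ℝ) (hf : ∀ i, 0 ≤ f i) :
    √(∏ i ∈ s, f i) = ∏ i ∈ s, √(f i) := by
  classical
  induction s using Finset.induction_on with
  | empty => simp
  | insert a s ha ih =>
    rw [Finset.prod_insert ha, Finset.prod_insert ha, Real.sqrt_mul (hf a), ih]

/-- The Hellinger affinity of two product laws differing in one coordinate is that of the two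
coordinate laws. -/
lemma sum_sqrt_signLaw {d : ℕ} {δ : ℝ} (h0 : 0 ≤ δ) (h1 : δ ≤ 1) (j : Fin d) (v : Fin d → Bool) :
    ∑ x, √(signLaw δ v x * signLaw δ (flipAt j v) x) = √(1 - δ ^ 2) := by
  have key : ∀ x, √(signLaw δ v x * signLaw δ (flipAt j v) x)
      = ∏ k, √(coinLaw δ (v k) (x k) * coinLaw δ (flipAt j v k) (x k)) := by
    intro x
    unfold signLaw
    rw [← Finset.prod_mul_distrib, sqrt_prod_nonneg]
    exact fun k => mul_nonneg (coinLaw_nonneg h0 h1 _ _) (coinLaw_nonneg h0 h1 _ _)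
  simp_rw [key]
  rw [sum_prod_bool fun k b => √(coinLaw δ (v k) b * coinLaw δ (flipAt j v k) b),
    Finset.prod_eq_single j]
  · have h4 : √((1 - δ ^ 2) / 4) = √(1 - δ ^ 2) / 2 := by
      rw [Real.sqrt_div' _ (by norm_num), show (4 : ℝ) = 2 ^ 2 by norm_num,
        Real.sqrt_sq (by norm_num)]
    have : ∀ b, coinLaw δ (v j) b * coinLaw δ (flipAt j v j) b = (1 - δ ^ 2) / 4 := by
      intro b
      simp only [flipAt, Function.update_self, coinLaw, sgnB]
      cases v j <;> cases b <;> simp <;> ring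
    simp_rw [this, h4]
    simp
    ring
  · intro k _ hk
    have : flipAt j v k = v k := by simp [flipAt, hk]
    simp_rw [this, Real.sqrt_mul_self (coinLaw_nonneg h0 h1 _ _)]
    exact sum_coinLaw δ _
  · simp

/-- Two probability vectors share mass at least half their squared Hellinger affinity, by
Cauchy-Schwarz applied to `p q = min(p, q) max(p, q)`. -/
lemma affinity_le_min {ι : Type*} [Fintype ι] (p q : ι → ℝ) (hp : ∀ i, 0 ≤ p i)
    (hq : ∀ i, 0 ≤ q i) (sp : ∑ i, p i = 1) (sq : ∑ i, q i = 1) :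
    (∑ i, √(p i * q i)) ^ 2 / 2 ≤ ∑ i, min (p i) (q i) := by
  have h1 : ∀ i, √(p i * q i) = √(min (p i) (q i)) * √(max (p i) (q i)) := by
    intro i
    rw [← Real.sqrt_mul (le_min (hp i) (hq i)), min_mul_max]
  have hcs := Finset.sum_mul_sq_le_sq_mul_sq Finset.univ
    (fun i => √(min (p i) (q i))) (fun i => √(max (p i) (q i)))
  simp_rw [← h1] at hcs
  have e1 : ∀ i, √(min (p i) (q i)) ^ 2 = min (p i) (q i) := fun i =>
    Real.sq_sqrt (le_min (hp i) (hq i))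
  have e2 : ∀ i, √(max (p i) (q i)) ^ 2 = max (p i) (q i) := fun i =>
    Real.sq_sqrt (le_max_of_le_left (hp i))
  simp_rw [e1, e2] at hcs
  have hm : ∑ i, max (p i) (q i) ≤ 2 := by
    calc ∑ i, max (p i) (q i) ≤ ∑ i, (p i + q i) := Finset.sum_le_sum fun i _ =>
          max_le (by linarith [hq i]) (by linarith [hp i])
      _ = 2 := by rw [Finset.sum_add_distrib, sp, sq]; norm_num
  have h0 : 0 ≤ ∑ i, min (p i) (q i) := Finset.sum_nonneg fun i _ => le_min (hp i) (hq i)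
  nlinarith

lemma sum_iid {m n : ℕ} (P : Fin m → ℝ) :
    ∑ xs : Fin n → Fin m, ∏ i, P (xs i) = (∑ x, P x) ^ n := by
  exact (Fintype.sum_pow P n).symm

/-- Mass shared by the `n`-fold laws of two sign vectors differing in one coordinate. -/
lemma overlap {d m n : ℕ} {δ : ℝ} (h0 : 0 ≤ δ) (h1 : δ ≤ 1) (e : Fin m ≃ (Fin d → Bool))
    (j : Fin d) (v : Fin d → Bool) :
    (1 - δ ^ 2) ^ n / 2 ≤ ∑ xs : Fin n → Fin m,
      min (∏ i, signLaw δ v (e (xs i))) (∏ i, signLaw δ (flipAt j v) (e (xs i))) := by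
  have hs : ∀ w : Fin d → Bool, ∑ xs : Fin n → Fin m, ∏ i, signLaw δ w (e (xs i)) = 1 := by
    intro w
    rw [sum_iid fun x => signLaw δ w (e x), e.sum_comp (signLaw δ w), sum_signLaw, one_pow]
  have hn : ∀ (w : Fin d → Bool) (xs : Fin n → Fin m), 0 ≤ ∏ i, signLaw δ w (e (xs i)) :=
    fun w xs => Finset.prod_nonneg fun i _ => signLaw_nonneg h0 h1 _ _
  refine le_trans (le_of_eq ?_) (affinity_le_min _ _ (hn v) (hn (flipAt j v)) (hs _) (hs _))
  congr 1
  have : ∀ xs : Fin n → Fin m,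
      √((∏ i, signLaw δ v (e (xs i))) * ∏ i, signLaw δ (flipAt j v) (e (xs i)))
      = ∏ i, √(signLaw δ v (e (xs i)) * signLaw δ (flipAt j v) (e (xs i))) := by
    intro xs
    rw [← Finset.prod_mul_distrib, sqrt_prod_nonneg]
    exact fun i => mul_nonneg (signLaw_nonneg h0 h1 _ _) (signLaw_nonneg h0 h1 _ _)
  simp_rw [this]
  rw [sum_iid fun x => √(signLaw δ v (e x) * signLaw δ (flipAt j v) (e x)),
    e.sum_comp fun x => √(signLaw δ v x * signLaw δ (flipAt j v) x), sum_sqrt_signLaw h0 h1,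
    ← pow_mul, mul_comm, pow_mul, Real.sq_sqrt (by nlinarith)]

/-! ### Excess loss of a wrong sign -/

/-- Marginalisation: expectation of a function of a single coordinate. -/
lemma sum_signLaw_mul {d : ℕ} (δ : ℝ) (v : Fin d → Bool) (j : Fin d) (h : Bool → ℝ) :
    ∑ x, signLaw δ v x * h (x j) = ∑ b, coinLaw δ (v j) b * h b := by
  have key : ∀ x : Fin d → Bool, signLaw δ v x * h (x j)
      = ∏ k, coinLaw δ (v k) (x k) * (if k = j then h (x k) else 1) := by
    intro x
    rw [Finset.prod_mul_distrib]
    simp [signLaw]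
  simp_rw [key]
  rw [sum_prod_bool fun k b => coinLaw δ (v k) b * (if k = j then h b else 1),
    Finset.prod_eq_single j]
  · simp
  · intro k _ hk
    simpa [hk] using sum_coinLaw δ (v k)
  · simp

lemma expLoss_eq {d m : ℕ} (δ L a : ℝ) (e : Fin m ≃ (Fin d → Bool)) (v : Fin d → Bool)
    (t : Fin d → ℝ) :
    expLoss (fun x => signLaw δ v (e x)) (fun θ x => absLoss L a θ (e x)) t
      = L * ∑ j, ∑ b, coinLaw δ (v j) b * |t j - a * sgnB b| := by
  unfold expLoss
  rw [e.sum_comp fun x => signLaw δ v x * absLoss L a t x]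
  simp_rw [← sum_signLaw_mul δ v _ fun b => |t _ - a * sgnB b|]
  rw [Finset.sum_comm, Finset.mul_sum]
  refine Finset.sum_congr rfl fun x _ => ?_
  rw [← Finset.mul_sum, absLoss]
  ring

open Classical in
/-- Excess of the one-coordinate expected loss over `a (1 - δ)`, which for `a ≥ 0` is its
value at `a v`: always nonnegative, and at least `a δ` when `t` has the wrong sign. -/
lemma coin_excess {δ a : ℝ} (h0 : 0 ≤ δ) (h1 : δ ≤ 1) (v : Bool) (t : ℝ) :
    a * (1 - δ) + a * δ * (if sgnB v * t ≤ 0 then 1 else 0)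
      ≤ ∑ b, coinLaw δ v b * |t - a * sgnB b| := by
  have A := neg_abs_le (t - a)
  have B := le_abs_self (t - a)
  have C := neg_abs_le (t + a)
  have D := le_abs_self (t + a)
  cases v <;> simp only [coinLaw, sgnB, Fintype.sum_bool] <;> split_ifs <;> simp_all <;> nlinarith

open Classical in
lemma expLoss_excess {d m : ℕ} {δ L a : ℝ} (h0 : 0 ≤ δ) (h1 : δ ≤ 1) (hL : 0 ≤ L) (ha : 0 ≤ a)
    (e : Fin m ≃ (Fin d → Bool)) (v : Fin d → Bool) (Θ : Set (Fin d → ℝ))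
    (hΘ : (fun j => a * sgnB (v j)) ∈ Θ) (t : Fin d → ℝ) :
    L * a * δ * ∑ j, (if sgnB (v j) * t j ≤ 0 then 1 else 0)
      ≤ expLoss (fun x => signLaw δ v (e x)) (fun θ x => absLoss L a θ (e x)) t
        - sInf (expLoss (fun x => signLaw δ v (e x)) (fun θ x => absLoss L a θ (e x)) '' Θ) := by
  have hinf : sInf (expLoss (fun x => signLaw δ v (e x)) (fun θ x => absLoss L a θ (e x)) '' Θ)
      ≤ L * ∑ j : Fin d, a * (1 - δ) := by
    refine le_trans (csInf_le ⟨0, ?_⟩ (Set.mem_image_of_mem _ hΘ)) (le_of_eq ?_)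
    · rintro _ ⟨θ, -, rfl⟩
      rw [expLoss_eq]
      exact mul_nonneg hL (Finset.sum_nonneg fun j _ => Finset.sum_nonneg fun b _ =>
        mul_nonneg (coinLaw_nonneg h0 h1 _ _) (abs_nonneg _))
    · rw [expLoss_eq]
      congr 1
      refine Finset.sum_congr rfl fun j _ => ?_
      have h2 : |-a - a| = 2 * a := by rw [abs_of_nonpos] <;> linarith
      have h3 : |a + a| = 2 * a := by rw [abs_of_nonneg] <;> linarith
      cases v j <;> simp [coinLaw, sgnB, h2, h3] <;> ring
  have hlow : L * ∑ j : Fin d, (a * (1 - δ) + a * δ * (if sgnB (v j) * t j ≤ 0 then 1 else 0))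
      ≤ expLoss (fun x => signLaw δ v (e x)) (fun θ x => absLoss L a θ (e x)) t := by
    rw [expLoss_eq]
    exact mul_le_mul_of_nonneg_left (Finset.sum_le_sum fun j _ => coin_excess h0 h1 _ _) hL
  have hsplit : ∑ j : Fin d, (a * (1 - δ) + a * δ * (if sgnB (v j) * t j ≤ 0 then 1 else 0))
      = ∑ j : Fin d, a * (1 - δ) + a * δ * ∑ j, (if sgnB (v j) * t j ≤ 0 then 1 else 0) := by
    rw [Finset.sum_add_distrib, Finset.mul_sum (a := a * δ)]
  rw [hsplit] at hlow
  linarith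

/-! ### Assouad's argument -/

open Classical in
/-- Assouad's bound in one coordinate, averaged over sign vectors by pairing each with its flip. -/
lemma sum_wrong_sign {d m n : ℕ} {δ : ℝ} (h0 : 0 ≤ δ) (h1 : δ ≤ 1) (e : Fin m ≃ (Fin d → Bool))
    (est : (Fin n → Fin m) → (Fin d → ℝ)) (j : Fin d) :
    ∑ _v : Fin d → Bool, (1 - δ ^ 2) ^ n / 4 ≤ ∑ v : Fin d → Bool, ∑ xs : Fin n → Fin m,
      (∏ i, signLaw δ v (e (xs i))) * (if sgnB (v j) * est xs j ≤ 0 then 1 else 0) := by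
  set G : (Fin d → Bool) → ℝ := fun v => ∑ xs : Fin n → Fin m,
      (∏ i, signLaw δ v (e (xs i))) * (if sgnB (v j) * est xs j ≤ 0 then 1 else 0) with hG
  have hflip : ∑ v, G (flipAt j v) = ∑ v, G v := 
    Equiv.sum_comp (flipAt_invol j).toPerm G
  have hpair : ∀ v, (1 - δ ^ 2) ^ n / 2 ≤ G v + G (flipAt j v) := by
    intro v
    refine (overlap h0 h1 e j v).trans ?_
    rw [hG, ← Finset.sum_add_distrib]
    refine Finset.sum_le_sum fun xs _ => ?_
    have hp : ∀ w, 0 ≤ ∏ i, signLaw δ w (e (xs i)) := fun w =>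
      Finset.prod_nonneg fun i _ => signLaw_nonneg h0 h1 _ _
    have hsg : sgnB (flipAt j v j) = - sgnB (v j) := by
      simp only [flipAt, Function.update_self, sgnB]
      cases v j <;> simp
    rw [hsg]
    rcases le_total (sgnB (v j) * est xs j) 0 with h | h
    · rw [if_pos h, mul_one]
      exact (min_le_left _ _).trans (le_add_of_nonneg_right
        (mul_nonneg (hp _) (by split_ifs <;> norm_num)))
    · rw [if_pos (show -sgnB (v j) * est xs j ≤ 0 by linarith), mul_one]
      exact (min_le_right _ _).trans (le_add_of_nonneg_left
        (mul_nonneg (hp _) (by split_ifs <;> norm_num)))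
  have hsum := Finset.sum_le_sum fun v (_ : v ∈ Finset.univ) => hpair v
  rw [Finset.sum_add_distrib, hflip, ← Finset.sum_div] at hsum
  rw [← Finset.sum_div]
  linarith

open Classical in
lemma exists_risk_ge {d m n : ℕ} {δ L a : ℝ} (h0 : 0 ≤ δ) (h1 : δ ≤ 1) (hL : 0 ≤ L) (ha : 0 ≤ a)
    (e : Fin m ≃ (Fin d → Bool)) (Θ : Set (Fin d → ℝ))
    (hΘ : ∀ v : Fin d → Bool, (fun j => a * sgnB (v j)) ∈ Θ)
    (est : (Fin n → Fin m) → (Fin d → ℝ)) :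
    ∃ v : Fin d → Bool, L * a * δ * (d * ((1 - δ ^ 2) ^ n / 4))
      ≤ risk d n m (fun x => signLaw δ v (e x)) (fun θ x => absLoss L a θ (e x)) Θ est := by
  have hrisk : ∀ v, L * a * δ * ∑ j, ∑ xs : Fin n → Fin m,
      (∏ i, signLaw δ v (e (xs i))) * (if sgnB (v j) * est xs j ≤ 0 then 1 else 0)
      ≤ risk d n m (fun x => signLaw δ v (e x)) (fun θ x => absLoss L a θ (e x)) Θ est := by
    intro v
    rw [Finset.sum_comm, Finset.mul_sum]
    unfold risk
    refine Finset.sum_le_sum fun xs _ => ?_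
    rw [← Finset.mul_sum, mul_left_comm]
    exact mul_le_mul_of_nonneg_left (expLoss_excess h0 h1 hL ha e v Θ (hΘ v) (est xs))
      (Finset.prod_nonneg fun i _ => signLaw_nonneg h0 h1 _ _)
  obtain ⟨v, -, hv⟩ := Finset.exists_le_of_sum_le (s := (Finset.univ : Finset (Fin d → Bool)))
    (f := fun _ => L * a * δ * (d * ((1 - δ ^ 2) ^ n / 4)))
    (g := fun v => L * a * δ * ∑ j, ∑ xs : Fin n → Fin m,
      (∏ i, signLaw δ v (e (xs i))) * (if sgnB (v j) * est xs j ≤ 0 then 1 else 0))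
    Finset.univ_nonempty (by
      rw [← Finset.mul_sum, ← Finset.mul_sum (f := fun v => ∑ j, ∑ xs : Fin n → Fin m,
        (∏ i, signLaw δ v (e (xs i))) * (if sgnB (v j) * est xs j ≤ 0 then 1 else 0))]
      refine mul_le_mul_of_nonneg_left ?_ (mul_nonneg (mul_nonneg hL ha) h0)
      rw [Finset.sum_comm]
      calc _ = ∑ j : Fin d, ∑ v : Fin d → Bool, (1 - δ ^ 2) ^ n / 4 := by
            simp; ring
        _ ≤ _ := Finset.sum_le_sum fun j _ => sum_wrong_sign h0 h1 e est j)
  exact ⟨v, hv.trans (hrisk v)⟩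

/-! ### Admissibility of the instance -/

lemma absLoss_convex {d : ℕ} {L : ℝ} (hL : 0 ≤ L) (a : ℝ) (x : Fin d → Bool) :
    ConvexOn ℝ Set.univ (fun θ => absLoss L a θ x) := by
  refine ⟨convex_univ, fun θ _ η _ s t hs ht hst => ?_⟩
  simp only [absLoss, smul_eq_mul, Pi.add_apply, Pi.smul_apply]
  rw [mul_left_comm s, mul_left_comm t, ← mul_add, Finset.mul_sum (a := s),
    Finset.mul_sum (a := t), ← Finset.sum_add_distrib]
  refine mul_le_mul_of_nonneg_left (Finset.sum_le_sum fun j _ => ?_) hL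
  calc |s * θ j + t * η j - a * sgnB (x j)|
      = |s * (θ j - a * sgnB (x j)) + t * (η j - a * sgnB (x j))| := by
        congr 1
        linear_combination (a * sgnB (x j)) * hst
    _ ≤ _ := by
        refine (abs_add_le _ _).trans (le_of_eq ?_)
        rw [abs_mul, abs_mul, abs_of_nonneg hs, abs_of_nonneg ht]

/-- Moving `θ` by `±1` along coordinate `j` changes the loss by at most `L`. -/
lemma absLoss_subgradient {d : ℕ} {L : ℝ} (hL : 0 ≤ L) (a : ℝ) (x : Fin d → Bool)
    (θ g : Fin d → ℝ) (hg : IsSubgradientAt (fun t => absLoss L a t x) θ g) (j : Fin d) :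
    |g j| ≤ L := by
  have key : ∀ u : ℝ, g j * u ≤ L * |u| := by
    intro u
    have h := hg (θ + Pi.single j u)
    have e1 : ∑ k, g k * ((θ + Pi.single j u : Fin d → ℝ) k - θ k) = g j * u := by
      simp [Pi.single_apply]
    have e2 : absLoss L a (θ + Pi.single j u) x ≤ absLoss L a θ x + L * |u| := by
      unfold absLoss
      rw [← mul_add]
      refine mul_le_mul_of_nonneg_left ?_ hL
      have : |u| = ∑ k, |(Pi.single j u : Fin d → ℝ) k| := by
        rw [Finset.sum_eq_single j] <;> simp +contextual
      rw [this, ← Finset.sum_add_distrib]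
      refine Finset.sum_le_sum fun k _ => ?_
      refine le_trans (le_of_eq ?_) (abs_add_le _ _)
      congr 1
      simp only [Pi.add_apply]
      ring
    rw [e1] at h
    linarith
  have h1 := key 1
  have h2 := key (-1)
  simp at h1 h2
  exact abs_le.2 ⟨by linarith, h1⟩

/-- A vector with entries at most `d^{-1/q}` has `ℓ_q` norm at most 1. -/
lemma lq_norm_le_one {d : ℕ} (hd : 1 ≤ d) {q : ℝ} (hq : 0 < q) (g : Fin d → ℝ)
    (hg : ∀ j, |g j| ≤ (d : ℝ) ^ (-(1 / q))) : (∑ j, |g j| ^ q) ^ (1 / q) ≤ 1 := by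
  have hd0 : (0 : ℝ) < d := by exact_mod_cast hd
  refine Real.rpow_le_one (Finset.sum_nonneg fun j _ => by positivity) ?_ (by positivity)
  calc ∑ j, |g j| ^ q ≤ ∑ j : Fin d, (d : ℝ)⁻¹ := Finset.sum_le_sum fun j _ => by
        refine (Real.rpow_le_rpow (abs_nonneg _) (hg j) hq.le).trans (le_of_eq ?_)
        rw [← Real.rpow_mul hd0.le, ← Real.rpow_neg_one]
        congr 1
        field_simp
    _ = 1 := by
        simp [hd0.ne']

theorem statement10 : ∃ c : ℝ, 0 < c ∧
    ∀ (d n : ℕ), 1 ≤ d → 1 ≤ n → ∀ (p r : ℝ), 2 ≤ p → 2 ≤ r →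
    ∃ (m K : ℕ) (F : (Fin d → ℝ) → Fin m → ℝ) (P : Fin K → Fin m → ℝ),
      0 < m ∧ 0 < K ∧
      IsHardInstance d n m K
        {θ : Fin d → ℝ | (∑ j, |θ j| ^ p) ^ (1 / p) ≤ 1}
        (fun g => (∑ j, |g j| ^ r) ^ (1 / r)) F P
        (c * min 1 ((d : ℝ) ^ ((1 : ℝ) / 2 - 1 / p) *
          (d : ℝ) ^ ((1 : ℝ) / 2 - 1 / r) / Real.sqrt n)) := by
  refine ⟨3 / 32, by norm_num, fun d n hd hn p r hp hr => ?_⟩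
  have hd0 : (0 : ℝ) < d := by exact_mod_cast hd
  have hn1 : (1 : ℝ) ≤ n := by exact_mod_cast hn
  have hsn : 1 ≤ √(n : ℝ) := Real.one_le_sqrt.2 hn1
  set e : Fin (Fintype.card (Fin d → Bool)) ≃ (Fin d → Bool) := (Fintype.equivFin _).symm
  set L : ℝ := (d : ℝ) ^ (-(1 / r)) with hLdef
  set a : ℝ := (d : ℝ) ^ (-(1 / p)) with hadef
  set δ : ℝ := 1 / (2 * √(n : ℝ)) with hδdef
  have hL : 0 ≤ L := by positivity
  have ha : 0 ≤ a := by positivity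
  have h0 : 0 ≤ δ := by positivity
  have h1 : δ ≤ 1 := by
    rw [hδdef, div_le_one (by positivity)]
    linarith
  refine ⟨_, _, fun θ x => absLoss L a θ (e x), fun v x => signLaw δ (e v) (e x),
    Fintype.card_pos, Fintype.card_pos, fun x => absLoss_convex hL a (e x), ?_,
    fun v x => signLaw_nonneg h0 h1 _ _, ?_, ?_⟩
  · intro x θ g hg
    exact lq_norm_le_one hd (by linarith) g fun j => absLoss_subgradient hL a (e x) θ g hg j
  · intro v
    rw [e.sum_comp (signLaw δ (e v)), sum_signLaw]
  · intro est
    obtain ⟨v, hv⟩ := exists_risk_ge h0 h1 hL ha e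
      {θ : Fin d → ℝ | (∑ j, |θ j| ^ p) ^ (1 / p) ≤ 1} (fun v => by
        refine lq_norm_le_one hd (by linarith) _ fun j => le_of_eq ?_
        rw [← hadef]
        cases v j <;> simp [sgnB, abs_of_nonneg ha]) est
    refine ⟨e.symm v, ?_⟩
    simp only [e.apply_symm_apply]
    refine le_trans ?_ hv
    -- Bernoulli's inequality with `n δ² = 1 / 4`
    have hpow : 3 / 4 ≤ (1 - δ ^ 2) ^ n := by
      have hb := one_add_mul_le_pow (show (-2 : ℝ) ≤ -δ ^ 2 by nlinarith) n
      have hnδ : (n : ℝ) * δ ^ 2 = 1 / 4 := by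
        rw [hδdef, div_pow, mul_pow, Real.sq_sqrt (by linarith)]
        field_simp
        norm_num
      rw [← sub_eq_add_neg] at hb
      linarith
    have hexp : (d : ℝ) ^ ((1 : ℝ) / 2 - 1 / p) * (d : ℝ) ^ ((1 : ℝ) / 2 - 1 / r)
        = L * a * d := by
      rw [hLdef, hadef, ← Real.rpow_add hd0, ← Real.rpow_add hd0]
      nth_rewrite 3 [← Real.rpow_one (d : ℝ)]
      rw [← Real.rpow_add hd0]
      congr 1
      ring
    calc _ ≤ 3 / 32 * ((d : ℝ) ^ ((1 : ℝ) / 2 - 1 / p) * (d : ℝ) ^ ((1 : ℝ) / 2 - 1 / r)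
          / √(n : ℝ)) := mul_le_mul_of_nonneg_left (min_le_right _ _) (by norm_num)
      _ = L * a * δ * (d * (3 / 4 / 4)) := by
        rw [hexp, hδdef]
        field_simp
        ring
      _ ≤ _ := by gcongr
end
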